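/- Let I ⊆ {1,…,n} have contiguous blocks B_1,…,B_k. The ℂ(v)-linear span in ℰ_n(v) of the elements g_w · (1 + g_{r_1}) ⋯ (1 + g_{r_k}) · ∏_{i∈I} e_i, taken over all w ∈ S_{n+1} and all choices of reflections (transpositions) r_j ∈ W_{B_j}, has dimension D_I over ℂ(v). -/

import Mathlib

noncomputable section

/-- The field `K = ℂ(v)` of rational functions over `ℂ`. -/
abbrev Kv : Type := RatFunc ℂ

/-- The variable `v ∈ ℂ(v)`. -/
noncomputable def vv : Kv := RatFunc.X

/-- The generator `g_i` of the free algebra (`.inl i ↦ g_i`). -/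
noncomputable def bgF (n : ℕ) (i : Fin n) : FreeAlgebra Kv (Fin n ⊕ Fin n) :=
  FreeAlgebra.ι Kv (Sum.inl i)

/-- The generator `e_i` of the free algebra (`.inr i ↦ e_i`). -/
noncomputable def beF (n : ℕ) (i : Fin n) : FreeAlgebra Kv (Fin n ⊕ Fin n) :=
  FreeAlgebra.ι Kv (Sum.inr i)

/-- Defining relations of the (type `A_n`) generalized algebra of braids and ties
`ℰ_n(v)`, for generators `g_1, …, g_n, e_1, …, e_n` (indexed here by `Fin n`,
with `|i − j|` rendered as `Nat.dist i j`). -/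
inductive BTRel (n : ℕ) :
    FreeAlgebra Kv (Fin n ⊕ Fin n) → FreeAlgebra Kv (Fin n ⊕ Fin n) → Prop
  | gg_comm (i j : Fin n) (h : 2 ≤ Nat.dist i j) :
      BTRel n (bgF n i * bgF n j) (bgF n j * bgF n i)
  | eg_comm (i j : Fin n) (h : 2 ≤ Nat.dist i j) :
      BTRel n (beF n i * bgF n j) (bgF n j * beF n i)
  | braid (i j : Fin n) (h : Nat.dist i j = 1) :
      BTRel n (bgF n i * bgF n j * bgF n i) (bgF n j * bgF n i * bgF n j)
  | egg (i j : Fin n) (h : Nat.dist i j = 1) :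
      BTRel n (beF n i * bgF n j * bgF n i) (bgF n j * bgF n i * beF n j)
  | ee_comm (i j : Fin n) :
      BTRel n (beF n i * beF n j) (beF n j * beF n i)
  | e_idem (i : Fin n) :
      BTRel n (beF n i * beF n i) (beF n i)
  | eg_same (i : Fin n) :
      BTRel n (beF n i * bgF n i) (bgF n i * beF n i)
  | eeg₁ (i j : Fin n) (h : Nat.dist i j = 1) :
      BTRel n (beF n i * beF n j * bgF n j) (beF n i * bgF n j * beF n i)
  | eeg₂ (i j : Fin n) (h : Nat.dist i j = 1) :
      BTRel n (beF n i * bgF n j * beF n i) (bgF n j * beF n i * beF n j)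
  | quad (i : Fin n) :
      BTRel n (bgF n i * bgF n i)
        (1 + (vv ^ 2 - 1) • (beF n i * (1 + bgF n i)))

/-- The generalized algebra of braids and ties `ℰ_n(v)` in type `A_n`. -/
abbrev BT (n : ℕ) := RingQuot (BTRel n)

/-- The generator `g_i` of `ℰ_n(v)`. -/
noncomputable def bg (n : ℕ) (i : Fin n) : BT n :=
  RingQuot.mkAlgHom Kv (BTRel n) (bgF n i)

/-- The generator `e_i` of `ℰ_n(v)`. -/
noncomputable def be (n : ℕ) (i : Fin n) : BT n :=
  RingQuot.mkAlgHom Kv (BTRel n) (beF n i)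

/-- The subalgebra `𝒞_n(v) ⊆ ℰ_n(v)` generated by `g_1, …, g_n`. -/
noncomputable def BTC (n : ℕ) : Subalgebra Kv (BT n) :=
  Algebra.adjoin Kv (Set.range (bg n))

open scoped Classical

/-- `B` is a contiguous block of `I ⊆ {1, …, n}` (subsets of `{1, …, n}` are modelled
as `Finset (Fin n)`): a maximal subset of `I` consisting of consecutive integers. -/
def IsBlock {n : ℕ} (I B : Finset (Fin n)) : Prop :=
  ∃ a b : Fin n, a ≤ b ∧ B = Finset.Icc a b ∧ B ⊆ I ∧
    (∀ c : Fin n, (c : ℕ) + 1 = (a : ℕ) → c ∉ I) ∧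
    (∀ c : Fin n, (b : ℕ) + 1 = (c : ℕ) → c ∉ I)

/-- The set of contiguous blocks of `I`. -/
noncomputable def blocksOf {n : ℕ} (I : Finset (Fin n)) : Finset (Finset (Fin n)) :=
  I.powerset.filter (fun B => IsBlock I B)

/-- `n_i(I)`: the number of contiguous blocks of `I` of size `i`. -/
noncomputable def nBlocks {n : ℕ} (I : Finset (Fin n)) (i : ℕ) : ℕ :=
  ((blocksOf I).filter (fun B => B.card = i)).card

/-- `N_I = (n+1 − Σ_i (i+1)·n_i(I))! · ∏_i ( n_i(I)! · ((i+1)!)^{n_i(I)} )`. -/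
noncomputable def NIval {n : ℕ} (I : Finset (Fin n)) : ℕ :=
  Nat.factorial (n + 1 - ∑ i ∈ Finset.range (n + 1), (i + 1) * nBlocks I i) *
    ∏ i ∈ Finset.range (n + 1),
      Nat.factorial (nBlocks I i) * Nat.factorial (i + 1) ^ nBlocks I i

/-- `j` is a descent of the permutation `w` of `{1, …, n+1}` (positions are indexed
by `Fin (n+1)`, the simple reflections `s_1, …, s_n` by `Fin n`):  `w(j) > w(j+1)`. -/
def IsDescent {n : ℕ} (w : Equiv.Perm (Fin (n + 1))) (j : Fin n) : Prop :=
  w j.succ < w j.castSucc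

/-- `D_I`: the number of permutations `w` of `{1, …, n+1}` such that every
contiguous block of `I` contains a descent of `w`. -/
noncomputable def DIval {n : ℕ} (I : Finset (Fin n)) : ℕ :=
  (Finset.univ.filter (fun w : Equiv.Perm (Fin (n + 1)) =>
    ∀ B ∈ blocksOf I, ∃ j ∈ B, IsDescent w j)).card

/-- The adjacent transposition `s_j = (j, j+1)` as a permutation of `Fin (n+1)`. -/
def sTrans {n : ℕ} (j : Fin n) : Equiv.Perm (Fin (n + 1)) :=
  Equiv.swap j.castSucc j.succ

/-- `l` is a reduced expression for `w`: the corresponding product of adjacent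
transpositions is `w`, and `l` has minimal length among all such words. -/
def IsReducedWord {n : ℕ} (w : Equiv.Perm (Fin (n + 1))) (l : List (Fin n)) : Prop :=
  (l.map sTrans).prod = w ∧
    ∀ l' : List (Fin n), (l'.map sTrans).prod = w → l.length ≤ l'.length

/-! ### Adjacent transpositions and inversions -/

namespace BTaux

variable {n : ℕ}

lemma sT_castSucc (i : Fin n) : sTrans i i.castSucc = i.succ := by simp [sTrans]

lemma sT_succ (i : Fin n) : sTrans i i.succ = i.castSucc := by simp [sTrans]

lemma sT_of_ne (i : Fin n) (p : Fin (n + 1)) (h1 : p ≠ i.castSucc) (h2 : p ≠ i.succ) :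
    sTrans i p = p := Equiv.swap_apply_of_ne_of_ne h1 h2

lemma sT_sq (i : Fin n) : sTrans i * sTrans i = 1 := by simp [sTrans]

lemma sT_sq_mul (i : Fin n) (u : Equiv.Perm (Fin (n + 1))) :
    sTrans i * (sTrans i * u) = u := by rw [← mul_assoc, sT_sq, one_mul]

lemma mul_sT_sT (w : Equiv.Perm (Fin (n + 1))) (i : Fin n) :
    w * sTrans i * sTrans i = w := by rw [mul_assoc, sT_sq, mul_one]

lemma sT_inv (i : Fin n) : (sTrans i)⁻¹ = sTrans i := by simp [sTrans]

lemma sT_ne_one (i : Fin n) : sTrans i ≠ 1 := by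
  intro h
  have := sT_castSucc i
  rw [h] at this
  simp [Fin.ext_iff] at this

lemma sT_sign (i : Fin n) : Equiv.Perm.sign (sTrans i) = -1 :=
  Equiv.Perm.sign_swap (by simp [Fin.ext_iff])

/-- value of an adjacent transposition, in natural numbers -/
lemma sT_val (i : Fin n) (p : Fin (n + 1)) :
    ((sTrans i p : Fin (n + 1)) : ℕ) =
      if (p : ℕ) = i then (i : ℕ) + 1 else if (p : ℕ) = i + 1 then (i : ℕ) else p := by
  split_ifs with h1 h2
  · have : p = i.castSucc := Fin.ext (by simpa using h1)
    rw [this, sT_castSucc]; simp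
  · have : p = i.succ := Fin.ext (by simpa using h2)
    rw [this, sT_succ]; simp
  · rw [sT_of_ne]
    · intro h; apply h1; simp [h]
    · intro h; apply h2; simp [h]

lemma sT_comm (i j : Fin n) (h : 2 ≤ Nat.dist i j) :
    sTrans i * sTrans j = sTrans j * sTrans i := by
  ext p
  simp only [Equiv.Perm.mul_apply, sT_val]
  unfold Nat.dist at h
  split_ifs <;> omega

lemma sT_braid_aux (i j : Fin n) (h : (j : ℕ) = i + 1) :
    sTrans i * sTrans j * sTrans i = sTrans j * sTrans i * sTrans j := by
  ext p
  simp only [Equiv.Perm.mul_apply, sT_val, h]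
  have hA : ¬ ((i : ℕ) + 1 + 1 = i) := by omega
  have hB : ¬ ((i : ℕ) = i + 1 + 1) := by omega
  by_cases h0 : (p : ℕ) = i
  · simp [h0, hA, hB]
  by_cases h1 : (p : ℕ) = i + 1
  · simp [h1, hA, hB]
  by_cases h2 : (p : ℕ) = i + 1 + 1
  · simp [h2, hA, hB]
  simp [h0, h1, h2]

lemma sT_braid (i j : Fin n) (h : Nat.dist i j = 1) :
    sTrans i * sTrans j * sTrans i = sTrans j * sTrans i * sTrans j := by
  have : (j : ℕ) = i + 1 ∨ (i : ℕ) = j + 1 := by unfold Nat.dist at h; omega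
  rcases this with h | h
  · exact sT_braid_aux i j h
  · exact (sT_braid_aux j i h).symm

/-- the set of inversions -/
def invSet (w : Equiv.Perm (Fin (n + 1))) : Finset (Fin (n + 1) × Fin (n + 1)) :=
  Finset.univ.filter (fun p => p.1 < p.2 ∧ w p.2 < w p.1)

lemma mem_invSet (w : Equiv.Perm (Fin (n + 1))) (a b : Fin (n + 1)) :
    (a, b) ∈ invSet w ↔ a < b ∧ w b < w a := by simp [invSet]

/-- number of inversions -/
def inv (w : Equiv.Perm (Fin (n + 1))) : ℕ := (invSet w).card

lemma not_desc_iff (w : Equiv.Perm (Fin (n + 1))) (i : Fin n) :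
    ¬ IsDescent w i ↔ w i.castSucc < w i.succ := by
  unfold IsDescent
  rw [not_lt]
  constructor
  · intro h
    apply lt_of_le_of_ne h
    intro h'
    have := w.injective h'
    simp [Fin.ext_iff] at this
  · exact le_of_lt

lemma desc_mul (w : Equiv.Perm (Fin (n + 1))) (i : Fin n) :
    IsDescent (w * sTrans i) i ↔ ¬ IsDescent w i := by
  rw [not_desc_iff]
  unfold IsDescent
  simp [sT_castSucc, sT_succ]

lemma desc_mul_far (w : Equiv.Perm (Fin (n + 1))) (i j : Fin n) (h : 2 ≤ Nat.dist i j) :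
    IsDescent (w * sTrans i) j ↔ IsDescent w j := by
  unfold IsDescent
  unfold Nat.dist at h
  rw [Equiv.Perm.mul_apply, Equiv.Perm.mul_apply, sT_of_ne, sT_of_ne] <;>
  · intro h'
    have := congrArg Fin.val h'
    simp at this
    omega

lemma inv_mul_asc (w : Equiv.Perm (Fin (n + 1))) (i : Fin n) (h : ¬ IsDescent w i) :
    inv (w * sTrans i) = inv w + 1 := by
  rw [not_desc_iff] at h
  have key : invSet (w * sTrans i) =
      insert (i.castSucc, i.succ)
        ((invSet w).map ((Equiv.prodCongr (sTrans i) (sTrans i)).toEmbedding)) := by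
    ext ⟨a, b⟩
    simp only [Finset.mem_insert, Finset.mem_map_equiv, Equiv.prodCongr_symm,
      Equiv.prodCongr_apply, Prod.map, mem_invSet, Equiv.Perm.mul_apply]
    have hs : (sTrans i).symm = sTrans i := sT_inv i
    rw [hs]
    by_cases hab : (a, b) = (i.castSucc, i.succ)
    · obtain ⟨rfl, rfl⟩ := Prod.mk.inj hab
      simp [sT_castSucc, sT_succ, h]
    · simp only [hab, false_or, and_congr_left_iff]
      intro hw
      have hab' : ¬ (a = i.castSucc ∧ b = i.succ) := fun hh => hab (by rw [hh.1, hh.2])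
      have hba : ¬ (a = i.succ ∧ b = i.castSucc) := by
        rintro ⟨rfl, rfl⟩
        rw [sT_castSucc, sT_succ] at hw
        exact absurd hw (not_lt.2 h.le)
      rw [Fin.lt_def, Fin.lt_def, sT_val, sT_val]
      simp only [Fin.ext_iff, Fin.val_castSucc, Fin.val_succ] at hab' hba
      split_ifs <;> omega
  unfold inv
  rw [key, Finset.card_insert_of_notMem, Finset.card_map]
  have hs : (sTrans i).symm = sTrans i := sT_inv i
  simp only [Finset.mem_map_equiv, Equiv.prodCongr_symm,
      Equiv.prodCongr_apply, Prod.map, mem_invSet, hs, sT_castSucc, sT_succ]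
  intro hh
  have := hh.1
  simp [Fin.lt_def] at this

lemma inv_mul_desc (w : Equiv.Perm (Fin (n + 1))) (i : Fin n) (h : IsDescent w i) :
    inv w = inv (w * sTrans i) + 1 := by
  have := inv_mul_asc (w * sTrans i) i (by rw [desc_mul]; exact not_not.2 h)
  rwa [mul_sT_sT] at this

lemma inv_one : inv (1 : Equiv.Perm (Fin (n + 1))) = 0 := by
  unfold inv invSet
  rw [Finset.card_eq_zero, Finset.filter_eq_empty_iff]
  rintro ⟨a, b⟩ _ ⟨h1, h2⟩
  exact absurd h1 (not_lt.2 h2.le)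

lemma eq_one_of_no_desc (w : Equiv.Perm (Fin (n + 1))) (h : ∀ i, ¬ IsDescent w i) : w = 1 := by
  have hm : StrictMono w := Fin.strictMono_iff_lt_succ.2 (fun i => (not_desc_iff w i).1 (h i))
  have : (hm.orderIsoOfSurjective w w.surjective) = OrderIso.refl _ := Subsingleton.elim _ _
  ext p
  have := congrArg (fun e : Fin (n+1) ≃o Fin (n+1) => e p) this
  simpa using congrArg Fin.val this

/-- product of a word of adjacent transpositions -/
abbrev wd (l : List (Fin n)) : Equiv.Perm (Fin (n + 1)) := (l.map sTrans).prod

lemma wd_append (l l' : List (Fin n)) : wd (l ++ l') = wd l * wd l' := by simp [wd]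

lemma wd_snoc (l : List (Fin n)) (i : Fin n) : wd (l ++ [i]) = wd l * sTrans i := by simp [wd]

lemma inv_wd_le (l : List (Fin n)) : inv (wd l) ≤ l.length := by
  induction l using List.reverseRecOn with
  | nil => simp [wd, inv_one]
  | append_singleton l i ih =>
    rw [wd_snoc]
    by_cases h : IsDescent (wd l) i
    · have := inv_mul_desc _ _ h
      simp; omega
    · rw [inv_mul_asc _ _ h]
      simp; omega

lemma exists_word (N : ℕ) : ∀ w : Equiv.Perm (Fin (n + 1)), inv w = N →
    ∃ l, wd l = w ∧ l.length = N := by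
  induction N with
  | zero =>
    intro w hw
    refine ⟨[], ?_, rfl⟩
    rw [eq_one_of_no_desc w]
    · simp [wd]
    · intro i hi
      have := inv_mul_desc w i hi
      omega
  | succ N ih =>
    intro w hw
    have : ∃ i, IsDescent w i := by
      by_contra hc
      push Not at hc
      rw [eq_one_of_no_desc w hc, inv_one] at hw
      omega
    obtain ⟨i, hi⟩ := this
    obtain ⟨l, hl, hlen⟩ := ih (w * sTrans i) (by have := inv_mul_desc w i hi; omega)
    refine ⟨l ++ [i], ?_, by simp [hlen]⟩
    rw [wd_snoc, hl, mul_sT_sT]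

lemma reduced_iff (w : Equiv.Perm (Fin (n + 1))) (l : List (Fin n)) :
    IsReducedWord w l ↔ wd l = w ∧ l.length = inv w := by
  constructor
  · rintro ⟨h1, h2⟩
    refine ⟨h1, le_antisymm ?_ ?_⟩
    · obtain ⟨l', hl', hlen⟩ := exists_word _ w rfl
      exact hlen ▸ h2 l' hl'
    · rw [← h1]; exact inv_wd_le l
  · rintro ⟨h1, h2⟩
    refine ⟨h1, fun l' hl' => ?_⟩
    rw [h2, ← hl']
    exact inv_wd_le _

/-- last letter of a reduced word is a descent -/
lemma last_desc {l : List (Fin n)} {i : Fin n} {w : Equiv.Perm (Fin (n + 1))}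
    (h1 : wd (l ++ [i]) = w) (h2 : (l ++ [i]).length = inv w) :
    IsDescent w i ∧ wd l = w * sTrans i ∧ l.length = inv (w * sTrans i) := by
  have e : wd l = w * sTrans i := by rw [← h1, wd_snoc, mul_sT_sT]
  have hle := inv_wd_le l
  rw [e] at hle
  simp at h2
  have hd : IsDescent w i := by
    by_contra hc
    have := inv_mul_asc w i hc
    omega
  have := inv_mul_desc w i hd
  exact ⟨hd, e, by omega⟩

lemma wd_reverse (l : List (Fin n)) : wd l.reverse = (wd l)⁻¹ := by
  induction l with
  | nil => simp [wd]
  | cons i l ih =>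
    rw [List.reverse_cons, wd_snoc, ih]
    simp [wd, sT_inv]

lemma inv_inv_le (w : Equiv.Perm (Fin (n + 1))) : inv w⁻¹ ≤ inv w := by
  obtain ⟨l, hl, hlen⟩ := exists_word _ w rfl
  rw [← hl, ← wd_reverse, hl, ← hlen]
  simpa using inv_wd_le l.reverse

lemma inv_inv (w : Equiv.Perm (Fin (n + 1))) : inv w⁻¹ = inv w :=
  le_antisymm (inv_inv_le w) (by simpa using inv_inv_le w⁻¹)

/-- Matsumoto's theorem for the symmetric group. -/
lemma matsumoto {M : Type*} [Monoid M] (g : Fin n → M)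
    (hc : ∀ i j : Fin n, 2 ≤ Nat.dist i j → g i * g j = g j * g i)
    (hb : ∀ i j : Fin n, Nat.dist i j = 1 → g i * g j * g i = g j * g i * g j) (N : ℕ) :
    ∀ (w : Equiv.Perm (Fin (n + 1))) (l l' : List (Fin n)), inv w = N →
      wd l = w → l.length = inv w → wd l' = w → l'.length = inv w →
      (l.map g).prod = (l'.map g).prod := by
  induction N using Nat.strong_induction_on with
  | _ N ih =>
  intro w l l' hN h1 h2 h1' h2'
  rcases List.eq_nil_or_concat l with rfl | ⟨l, i, rfl⟩
  · have : l' = [] := List.length_eq_zero_iff.1 (by rw [h2', ← h2]; rfl)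
    rw [this]
  rcases List.eq_nil_or_concat l' with rfl | ⟨l', j, rfl⟩
  · rw [← h2'] at h2; simp at h2
  rw [List.concat_eq_append] at h1 h2 h1' h2'
  rw [List.concat_eq_append, List.concat_eq_append]
  obtain ⟨di, ei, li⟩ := last_desc h1 h2
  obtain ⟨dj, ej, lj⟩ := last_desc h1' h2'
  have hi := inv_mul_desc w i di
  have hj := inv_mul_desc w j dj
  simp only [List.map_append, List.prod_append, List.map_cons, List.map_nil, List.prod_singleton]
  by_cases hij : i = j
  · subst hij
    rw [ih (inv (w * sTrans i)) (by omega) _ l l' rfl ei li ej lj]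
  have hne : (i : ℕ) ≠ j := fun h => hij (Fin.ext h)
  by_cases hd : 2 ≤ Nat.dist i j
  · have dij : IsDescent (w * sTrans i) j := (desc_mul_far w i j hd).2 dj
    have h3 := inv_mul_desc _ _ dij
    obtain ⟨l2, e2, len2⟩ := exists_word _ (w * sTrans i * sTrans j) rfl
    have a1 := ih (inv (w * sTrans i)) (by omega) _ l (l2 ++ [j]) rfl ei li
      (by rw [wd_snoc, e2, mul_sT_sT]) (by simp; omega)
    have a2 := ih (inv (w * sTrans j)) (by omega) _ l' (l2 ++ [i]) rfl ej lj
      (by rw [wd_snoc, e2, mul_assoc w, sT_comm i j hd, ← mul_assoc, mul_sT_sT])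
      (by simp; omega)
    rw [a1, a2]
    simp only [List.map_append, List.prod_append, List.map_cons, List.map_nil,
      List.prod_singleton]
    rw [mul_assoc, mul_assoc, hc i j hd]
  · have hd1 : Nat.dist i j = 1 := by
      unfold Nat.dist at *; omega
    have hvals : IsDescent (w * sTrans i) j ∧ IsDescent (w * sTrans i * sTrans j) i := by
      unfold IsDescent at *
      simp only [Equiv.Perm.mul_apply]
      have : (j : ℕ) = i + 1 ∨ (i : ℕ) = j + 1 := by unfold Nat.dist at hd1; omega
      rcases this with h | h
      · have hji : j.castSucc = i.succ := Fin.ext (by simpa using h)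
        rw [hji] at dj ⊢
        have a1 : sTrans i j.succ = j.succ := sT_of_ne _ _
          (by simp [Fin.ext_iff]; omega) (by simp [Fin.ext_iff]; omega)
        have a2 : sTrans j i.castSucc = i.castSucc := sT_of_ne _ _
          (by simp [Fin.ext_iff]; omega) (by simp [Fin.ext_iff]; omega)
        have a3 : sTrans j i.succ = j.succ := by rw [← hji, sT_castSucc]
        rw [a1, a2, a3, a1, sT_castSucc, sT_succ]
        exact ⟨dj.trans di, dj⟩
      · have hji : i.castSucc = j.succ := Fin.ext (by simpa using h)
        rw [← hji] at dj ⊢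
        have a1 : sTrans i j.castSucc = j.castSucc := sT_of_ne _ _
          (by simp [Fin.ext_iff]; omega) (by simp [Fin.ext_iff]; omega)
        have a2 : sTrans j i.succ = i.succ := sT_of_ne _ _
          (by simp [Fin.ext_iff]; omega) (by simp [Fin.ext_iff]; omega)
        have a3 : sTrans j i.castSucc = j.castSucc := by rw [hji, sT_succ]
        rw [a1, a2, a3, a1, sT_castSucc, sT_succ]
        exact ⟨di.trans dj, dj⟩
    obtain ⟨dij, diji⟩ := hvals
    have h3 := inv_mul_desc _ _ dij
    have h4 := inv_mul_desc _ _ diji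
    obtain ⟨l2, e2, len2⟩ := exists_word _ (w * sTrans i * sTrans j * sTrans i) rfl
    have a1 := ih (inv (w * sTrans i)) (by omega) _ l (l2 ++ [i] ++ [j]) rfl ei li
      (by rw [wd_snoc, wd_snoc, e2, mul_sT_sT, mul_sT_sT]) (by simp; omega)
    have a2 := ih (inv (w * sTrans j)) (by omega) _ l' (l2 ++ [j] ++ [i]) rfl ej lj
      (by
        have hbr := sT_braid i j hd1
        have : w * sTrans i * sTrans j * sTrans i = w * sTrans j * sTrans i * sTrans j := by
          rw [mul_assoc w, mul_assoc w, hbr, mul_assoc w, mul_assoc w]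
        rw [wd_snoc, wd_snoc, e2, this, mul_sT_sT, mul_sT_sT])
      (by simp; omega)
    rw [a1, a2]
    simp only [List.map_append, List.prod_append, List.map_cons, List.map_nil,
      List.prod_singleton]
    have := hb i j hd1
    simp only [mul_assoc] at this ⊢
    rw [this]

/-! ### The Hecke operators on functions on the symmetric group -/

/-- functions on the symmetric group -/
abbrev Vn (n : ℕ) := Equiv.Perm (Fin (n + 1)) → Kv

/-- the parameter `q = v²` -/
def qq : Kv := vv ^ 2

/-- right Hecke operator -/
def R (i : Fin n) : Vn n →ₗ[Kv] Vn n where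
  toFun f w := if IsDescent w i then (qq - 1) * f w + f (w * sTrans i)
    else qq * f (w * sTrans i)
  map_add' f h := by
    funext w
    simp only [Pi.add_apply]
    split_ifs <;> ring
  map_smul' c f := by
    funext w
    simp only [Pi.smul_apply, smul_eq_mul, RingHom.id_apply]
    split_ifs <;> ring

lemma R_desc (i : Fin n) (f : Vn n) (w) (h : IsDescent w i) :
    R i f w = (qq - 1) * f w + f (w * sTrans i) := if_pos h

lemma R_asc (i : Fin n) (f : Vn n) (w) (h : ¬ IsDescent w i) :
    R i f w = qq * f (w * sTrans i) := if_neg h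

lemma R_quad (i : Fin n) : R i * R i = qq • 1 + (qq - 1) • R i := by
  refine LinearMap.ext fun f => ?_
  funext w
  simp only [Module.End.mul_apply, LinearMap.add_apply, LinearMap.smul_apply,
    Module.End.one_apply, Pi.add_apply, Pi.smul_apply, smul_eq_mul]
  by_cases h : IsDescent w i
  · have h' : ¬ IsDescent (w * sTrans i) i := by rw [desc_mul]; exact not_not.2 h
    rw [R_desc _ _ _ h, R_desc _ _ _ h, R_asc _ _ _ h', mul_sT_sT]
    ring
  · have h' : IsDescent (w * sTrans i) i := by rw [desc_mul]; exact h
    rw [R_asc _ _ _ h, R_asc _ _ _ h, R_desc _ _ _ h', mul_sT_sT]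
    ring

lemma dist_symm' {i j : Fin n} (h : 2 ≤ Nat.dist i j) : 2 ≤ Nat.dist j i := by
  rwa [Nat.dist_comm]

lemma R_comm (i j : Fin n) (h : 2 ≤ Nat.dist i j) : R i * R j = R j * R i := by
  refine LinearMap.ext fun f => ?_
  funext w
  have e : w * sTrans j * sTrans i = w * sTrans i * sTrans j := by
    rw [mul_assoc, mul_assoc, sT_comm i j h]
  simp only [Module.End.mul_apply, R, LinearMap.coe_mk, AddHom.coe_mk, desc_mul_far w i j h,
    desc_mul_far w j i (dist_symm' h), e]
  split_ifs <;> ring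

lemma R_braid_aux (i j : Fin n) (h : (j : ℕ) = i + 1) : R i * R j * R i = R j * R i * R j := by
  refine LinearMap.ext fun f => ?_
  funext w
  have hji : j.castSucc = i.succ := Fin.ext (by simpa using h)
  have a1 : sTrans i j.succ = j.succ := sT_of_ne _ _
    (by simp [Fin.ext_iff]; omega) (by simp [Fin.ext_iff]; omega)
  have a2 : sTrans j i.castSucc = i.castSucc := sT_of_ne _ _
    (by simp [Fin.ext_iff]; omega) (by simp [Fin.ext_iff]; omega)
  have a3 : sTrans j i.succ = j.succ := by rw [← hji, sT_castSucc]
  have a4 : sTrans j j.succ = i.succ := by rw [← hji, sT_succ]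
  have b := sT_braid_aux i j h
  have b' : w * sTrans j * sTrans i * sTrans j = w * sTrans i * sTrans j * sTrans i := by
    rw [mul_assoc w, mul_assoc w, ← b, mul_assoc w, mul_assoc w]
  simp only [Module.End.mul_apply, R, LinearMap.coe_mk, AddHom.coe_mk, IsDescent,
    Equiv.Perm.mul_apply, hji, a1, a2, a3, a4, sT_castSucc, sT_succ, mul_sT_sT, b']
  have n1 : w i.castSucc ≠ w i.succ := fun hh => by
    have := w.injective hh; simp [Fin.ext_iff] at this
  have n2 : w j.succ ≠ w i.succ := fun hh => by
    have := w.injective hh; simp [Fin.ext_iff] at this; omega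
  have n3 : w i.castSucc ≠ w j.succ := fun hh => by
    have := w.injective hh; simp [Fin.ext_iff] at this; omega
  rcases lt_or_gt_of_ne n1 with h1 | h1 <;> rcases lt_or_gt_of_ne n2 with h2 | h2 <;>
    rcases lt_or_gt_of_ne n3 with h3 | h3 <;>
    first
    | (exfalso; order)
    | (simp only [h1, h2, h3, h1.not_gt, h2.not_gt, h3.not_gt, if_true, if_false] <;> ring)

lemma R_braid (i j : Fin n) (h : Nat.dist i j = 1) : R i * R j * R i = R j * R i * R j := by
  have : (j : ℕ) = i + 1 ∨ (i : ℕ) = j + 1 := by unfold Nat.dist at h; omega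
  rcases this with h | h
  · exact R_braid_aux i j h
  · exact (R_braid_aux j i h).symm

/-- images of the generators -/
def genImg (n : ℕ) : Fin n ⊕ Fin n → Module.End Kv (Vn n) := Sum.elim R (fun _ => 1)

/-- The representation of the algebra through the Hecke algebra. -/
def phi (n : ℕ) : BT n →ₐ[Kv] Module.End Kv (Vn n) :=
  RingQuot.liftAlgHom Kv ⟨FreeAlgebra.lift Kv (genImg n), by
    have hg : ∀ i, FreeAlgebra.lift Kv (genImg n) (bgF n i) = R i := by
      intro i; simp [bgF, genImg]
    have he : ∀ i, FreeAlgebra.lift Kv (genImg n) (beF n i) = 1 := by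
      intro i; simp [beF, genImg]
    intro x y hxy
    induction hxy with
    | gg_comm i j h => simpa only [map_mul, hg] using R_comm i j h
    | eg_comm i j h => simp only [map_mul, hg, he, one_mul, mul_one]
    | braid i j h => simpa only [map_mul, hg] using R_braid i j h
    | egg i j h => simp only [map_mul, hg, he, one_mul, mul_one]
    | ee_comm i j => simp only [map_mul, he]
    | e_idem i => simp only [map_mul, he, one_mul]
    | eg_same i => simp only [map_mul, hg, he, one_mul, mul_one]
    | eeg₁ i j h => simp only [map_mul, hg, he, one_mul, mul_one]
    | eeg₂ i j h => simp only [map_mul, hg, he, one_mul, mul_one]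
    | quad i =>
      simp only [map_mul, map_add, map_one, map_smul, hg, he, one_mul]
      rw [R_quad]
      unfold qq
      refine LinearMap.ext fun f => ?_
      funext w
      simp only [LinearMap.add_apply, LinearMap.smul_apply, Module.End.one_apply, Pi.add_apply,
        Pi.smul_apply, smul_eq_mul]
      ring⟩

lemma phi_bg (i : Fin n) : phi n (bg n i) = R i := by
  unfold phi bg
  rw [RingQuot.liftAlgHom_mkAlgHom_apply]
  simp [bgF, genImg]

lemma phi_be (i : Fin n) : phi n (be n i) = 1 := by
  unfold phi be
  rw [RingQuot.liftAlgHom_mkAlgHom_apply]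
  simp [beF, genImg]

/-- delta functions -/
def dl (w : Equiv.Perm (Fin (n + 1))) : Vn n := Pi.single w 1

lemma dl_apply (w u : Equiv.Perm (Fin (n + 1))) : dl w u = if u = w then 1 else 0 := by
  simp [dl, Pi.single_apply]

lemma R_dl_asc (i : Fin n) (w : Equiv.Perm (Fin (n + 1))) (h : ¬ IsDescent w i) :
    R i (dl w) = dl (w * sTrans i) := by
  funext u
  have e : u * sTrans i = w ↔ u = w * sTrans i := by
    constructor
    · rintro rfl; rw [mul_sT_sT]
    · rintro rfl; rw [mul_sT_sT]
  by_cases hu : IsDescent u i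
  · rw [R_desc _ _ _ hu]
    have : u ≠ w := by rintro rfl; exact h hu
    simp [dl_apply, this, e]
  · rw [R_asc _ _ _ hu]
    have : u ≠ w * sTrans i := by
      rintro rfl; rw [desc_mul] at hu; exact hu h
    simp [dl_apply, this, e]

lemma R_dl_desc (i : Fin n) (w : Equiv.Perm (Fin (n + 1))) (h : IsDescent w i) :
    R i (dl w) = qq • dl (w * sTrans i) + (qq - 1) • dl w := by
  have h' : ¬ IsDescent (w * sTrans i) i := by rw [desc_mul]; exact not_not.2 h
  have := congrArg (fun T => T (dl (w * sTrans i))) (R_quad i)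
  simp only [Module.End.mul_apply, LinearMap.add_apply, LinearMap.smul_apply,
    Module.End.one_apply] at this
  rwa [R_dl_asc _ _ h', mul_sT_sT] at this

lemma phi_word (l : List (Fin n)) : l.length = inv (wd l) →
    phi n (l.map (bg n)).prod (dl 1) = dl (wd l)⁻¹ := by
  induction l with
  | nil => intro _; simp [wd]
  | cons i l ih =>
    intro h
    have e : wd (i :: l) = sTrans i * wd l := by simp [wd]
    have e' : (wd (i :: l))⁻¹ = (wd l)⁻¹ * sTrans i := by rw [e, mul_inv_rev, sT_inv]
    rw [← inv_inv, e', List.length_cons] at h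
    have hl := inv_wd_le l
    rw [← inv_inv] at hl
    have hd : ¬ IsDescent (wd l)⁻¹ i := by
      intro hc
      have := inv_mul_desc _ _ hc
      omega
    have h2 := inv_mul_asc _ _ hd
    rw [List.map_cons, List.prod_cons, map_mul, Module.End.mul_apply, phi_bg,
      ih (by rw [← inv_inv (wd l)]; omega), R_dl_asc _ _ hd, e']


lemma bg_comm (i j : Fin n) (h : 2 ≤ Nat.dist i j) : bg n i * bg n j = bg n j * bg n i := by
  simpa only [bg, be, map_mul] using RingQuot.mkAlgHom_rel Kv (BTRel.gg_comm i j h)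

lemma bg_braid (i j : Fin n) (h : Nat.dist i j = 1) :
    bg n i * bg n j * bg n i = bg n j * bg n i * bg n j := by
  simpa only [bg, be, map_mul] using RingQuot.mkAlgHom_rel Kv (BTRel.braid i j h)

lemma be_comm (i j : Fin n) : be n i * be n j = be n j * be n i := by
  simpa only [bg, be, map_mul] using RingQuot.mkAlgHom_rel Kv (BTRel.ee_comm i j)

lemma be_idem (i : Fin n) : be n i * be n i = be n i := by
  simpa only [bg, be, map_mul] using RingQuot.mkAlgHom_rel Kv (BTRel.e_idem i)

lemma beg_far (i j : Fin n) (h : 2 ≤ Nat.dist i j) : be n i * bg n j = bg n j * be n i := by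
  simpa only [bg, be, map_mul] using RingQuot.mkAlgHom_rel Kv (BTRel.eg_comm i j h)

lemma beg_same (i : Fin n) : be n i * bg n i = bg n i * be n i := by
  simpa only [bg, be, map_mul] using RingQuot.mkAlgHom_rel Kv (BTRel.eg_same i)

lemma beeg (i j : Fin n) (h : Nat.dist i j = 1) :
    be n i * be n j * bg n j = bg n j * be n i * be n j := by
  have h1 := RingQuot.mkAlgHom_rel Kv (BTRel.eeg₁ i j h)
  have h2 := RingQuot.mkAlgHom_rel Kv (BTRel.eeg₂ i j h)
  simp only [map_mul] at h1 h2
  exact h1.trans h2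

lemma bg_quad (i : Fin n) :
    bg n i * bg n i = 1 + (qq - 1) • (be n i * (1 + bg n i)) := by
  simpa only [bg, be, qq, map_mul, map_add, map_one, map_smul] using
    RingQuot.mkAlgHom_rel Kv (BTRel.quad i)

lemma beeg' (m i : Fin n) :
    be n m * be n i * bg n i = bg n i * (be n m * be n i) := by
  by_cases h : m = i
  · subst h
    rw [be_idem, beg_same]
  by_cases h1 : Nat.dist m i = 1
  · rw [beeg m i h1, mul_assoc]
  · have h2 : 2 ≤ Nat.dist m i := by
      have : (m : ℕ) ≠ i := fun hh => h (Fin.ext hh)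
      unfold Nat.dist at *; omega
    rw [mul_assoc, beg_same, ← mul_assoc, beg_far m i h2, mul_assoc]

/-- `e_I` -/
def eI (I : Finset (Fin n)) : BT n := ((I.sort (· ≤ ·)).map (be n)).prod

lemma be_mul_eI (I : Finset (Fin n)) (i : Fin n) (hi : i ∈ I) : be n i * eI I = eI I := by
  have hm : be n i ∈ (I.sort (· ≤ ·)).map (be n) :=
    List.mem_map.2 ⟨i, (Finset.mem_sort _).2 hi, rfl⟩
  have := List.prod_erase_of_comm hm (by
    intro x hx y hy
    obtain ⟨a, _, rfl⟩ := List.mem_map.1 hx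
    obtain ⟨b, _, rfl⟩ := List.mem_map.1 hy
    exact be_comm a b)
  unfold eI
  rw [← this, ← mul_assoc, be_idem]

lemma be_list_comm (i : Fin n) (l : List (Fin n)) :
    be n i * (l.map (be n)).prod * bg n i = bg n i * (be n i * (l.map (be n)).prod) := by
  induction l with
  | nil => simp [beg_same]
  | cons m l ih =>
    rw [List.map_cons, List.prod_cons]
    set P := (l.map (be n)).prod
    calc be n i * (be n m * P) * bg n i = be n m * (be n i * P * bg n i) := by
          rw [← mul_assoc, be_comm i m]; simp only [mul_assoc]
      _ = be n m * (bg n i * (be n i * P)) := by rw [ih]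
      _ = be n m * (bg n i * (be n i * be n i * P)) := by rw [be_idem]
      _ = be n m * (be n i * bg n i * (be n i * P)) := by rw [beg_same]; simp only [mul_assoc]
      _ = be n m * be n i * bg n i * (be n i * P) := by simp only [mul_assoc]
      _ = bg n i * (be n m * (be n i * be n i) * P) := by rw [beeg']; simp only [mul_assoc]
      _ = bg n i * (be n i * (be n m * P)) := by
          rw [be_idem, be_comm m i]; simp only [mul_assoc]

lemma eI_bg (I : Finset (Fin n)) (i : Fin n) (hi : i ∈ I) : eI I * bg n i = bg n i * eI I := by
  rw [← be_mul_eI I i hi]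
  exact be_list_comm i _

lemma bg_quad_eI (I : Finset (Fin n)) (i : Fin n) (hi : i ∈ I) :
    bg n i * bg n i * eI I = qq • eI I + (qq - 1) • (bg n i * eI I) := by
  have : be n i * (1 + bg n i) * eI I = eI I + bg n i * eI I := by
    rw [mul_add, mul_one, add_mul, be_mul_eI I i hi, mul_assoc, ← eI_bg I i hi, ← mul_assoc,
      be_mul_eI I i hi]
  rw [bg_quad, add_mul, one_mul, smul_mul_assoc, this, smul_add, sub_smul, sub_smul, one_smul, one_smul]
  abel

/-! ### The elements `g_w` -/

/-- `g_w` -/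
def gw (w : Equiv.Perm (Fin (n + 1))) : BT n :=
  ((exists_word _ w rfl).choose.map (bg n)).prod

lemma gw_eq {w : Equiv.Perm (Fin (n + 1))} {l : List (Fin n)} (h1 : wd l = w)
    (h2 : l.length = inv w) : (l.map (bg n)).prod = gw w :=
  matsumoto (bg n) bg_comm bg_braid _ w _ _ rfl h1 h2 (exists_word _ w rfl).choose_spec.1
    (exists_word _ w rfl).choose_spec.2

lemma gw_asc (w : Equiv.Perm (Fin (n + 1))) (i : Fin n) (h : ¬ IsDescent w i) :
    gw (w * sTrans i) = gw w * bg n i := by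
  obtain ⟨l, hl, hlen⟩ := exists_word _ w rfl
  rw [← gw_eq hl hlen, ← gw_eq (l := l ++ [i]) (by rw [wd_snoc, hl])
    (by rw [inv_mul_asc _ _ h]; simp [hlen])]
  simp

lemma phi_gw (w : Equiv.Perm (Fin (n + 1))) : phi n (gw w) (dl 1) = dl w⁻¹ := by
  obtain ⟨l, hl, hlen⟩ := exists_word _ w rfl
  rw [← gw_eq hl hlen, phi_word l (by rw [hl, hlen]), hl]

lemma phi_eI (I : Finset (Fin n)) : phi n (eI I) = 1 := by
  unfold eI
  generalize I.sort (· ≤ ·) = l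
  induction l with
  | nil => simp
  | cons i l ih => simp [phi_be, ih]

/-- the linear map sending delta functions to `g_w` -/
def Gam (n : ℕ) : Vn n →ₗ[Kv] BT n :=
  ∑ w, (LinearMap.proj w : Vn n →ₗ[Kv] Kv).smulRight (gw w)

lemma Gam_apply (f : Vn n) : Gam n f = ∑ w, f w • gw w := by
  simp [Gam]

lemma Gam_dl (w : Equiv.Perm (Fin (n + 1))) : Gam n (dl w) = gw w := by
  rw [Gam_apply]
  simp [dl_apply]

lemma lin_ext {M : Type*} [AddCommMonoid M] [Module Kv M] (A B : Vn n →ₗ[Kv] M)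
    (h : ∀ w, A (dl w) = B (dl w)) : A = B := by
  apply LinearMap.pi_ext'
  intro w
  ext1
  exact h w

/-- `f ↦ Γ(f) e_I` -/
def Psi (I : Finset (Fin n)) : Vn n →ₗ[Kv] BT n :=
  (LinearMap.mulRight Kv (eI I)).comp (Gam n)

lemma Psi_apply (I : Finset (Fin n)) (f : Vn n) : Psi I f = Gam n f * eI I := rfl

lemma Psi_inj (I : Finset (Fin n)) : Function.Injective (Psi I) := by
  rw [← LinearMap.ker_eq_bot, LinearMap.ker_eq_bot']
  intro f hf
  have h := congrArg (fun x => phi n x (dl 1)) hf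
  simp only [Psi_apply, map_mul, phi_eI, mul_one, map_zero, LinearMap.zero_apply, Gam_apply,
    map_sum, map_smul, LinearMap.sum_apply, LinearMap.smul_apply, phi_gw] at h
  funext w
  have h2 := congrFun h w⁻¹
  simpa [Finset.sum_apply, dl_apply] using h2

lemma Gam_R (I : Finset (Fin n)) (i : Fin n) (hi : i ∈ I) (f : Vn n) :
    Gam n f * bg n i * eI I = Gam n (R i f) * eI I := by
  have : (LinearMap.mulRight Kv (bg n i * eI I)).comp (Gam n) = (Psi I).comp (R i) := by
    apply lin_ext
    intro w
    simp only [LinearMap.comp_apply, LinearMap.mulRight_apply, Psi_apply]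
    by_cases h : IsDescent w i
    · have h' : ¬ IsDescent (w * sTrans i) i := by rw [desc_mul]; exact not_not.2 h
      have e : gw w = gw (w * sTrans i) * bg n i := by
        rw [← gw_asc _ _ h', mul_sT_sT]
      rw [R_dl_desc _ _ h, map_add, map_smul, map_smul, Gam_dl, Gam_dl, e, add_mul,
        mul_assoc, ← mul_assoc (bg n i), bg_quad_eI I i hi, mul_add, mul_smul_comm,
        mul_smul_comm, smul_mul_assoc, smul_mul_assoc, mul_assoc]
    · rw [R_dl_asc _ _ h, Gam_dl, Gam_dl, gw_asc _ _ h, mul_assoc]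
  have := congrArg (fun T => T f) this
  simpa only [LinearMap.comp_apply, LinearMap.mulRight_apply, Psi_apply, mul_assoc] using this

/-- right operator of a word -/
def Rl : List (Fin n) → Vn n → Vn n
  | [], f => f
  | i :: l, f => Rl l (R i f)

lemma word_eI (I : Finset (Fin n)) (l : List (Fin n)) (hl : ∀ i ∈ l, i ∈ I) :
    eI I * (l.map (bg n)).prod = (l.map (bg n)).prod * eI I := by
  induction l with
  | nil => simp
  | cons i l ih =>
    rw [List.map_cons, List.prod_cons, ← mul_assoc, eI_bg I i (hl i (by simp)), mul_assoc,
      ih (fun j hj => hl j (by simp [hj])), mul_assoc]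

lemma Gam_Rl (I : Finset (Fin n)) (l : List (Fin n)) (hl : ∀ i ∈ l, i ∈ I) : ∀ f : Vn n,
    Gam n f * (l.map (bg n)).prod * eI I = Gam n (Rl l f) * eI I := by
  induction l with
  | nil => intro f; simp [Rl]
  | cons i l ih =>
    intro f
    have hl' : ∀ j ∈ l, j ∈ I := fun j hj => hl j (by simp [hj])
    rw [List.map_cons, List.prod_cons, mul_assoc, mul_assoc, ← word_eI I l hl',
      ← mul_assoc (bg n i), ← mul_assoc, ← mul_assoc, Gam_R I i (hl i (by simp)), mul_assoc,
      word_eI I l hl', ← mul_assoc, ih hl']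
    rfl

lemma Gam_one_add (I : Finset (Fin n)) (l : List (Fin n)) (hl : ∀ i ∈ l, i ∈ I) (f : Vn n) :
    Gam n f * (1 + (l.map (bg n)).prod) * eI I = Gam n (f + Rl l f) * eI I := by
  rw [mul_add, add_mul, Gam_Rl I l hl, map_add, add_mul, mul_one]

lemma one_add_eI (I : Finset (Fin n)) (l : List (Fin n)) (hl : ∀ i ∈ l, i ∈ I) :
    eI I * (1 + (l.map (bg n)).prod) = (1 + (l.map (bg n)).prod) * eI I := by
  rw [mul_add, add_mul, word_eI I l hl, mul_one, one_mul]

/-- iterated application of `1 + R_l` -/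
def Fl : List (List (Fin n)) → Vn n → Vn n
  | [], f => f
  | l :: L, f => Fl L (f + Rl l f)

lemma prod_eI (I : Finset (Fin n)) (L : List (List (Fin n))) (hL : ∀ l ∈ L, ∀ i ∈ l, i ∈ I) :
    eI I * (L.map (fun l => 1 + (l.map (bg n)).prod)).prod =
      (L.map (fun l => 1 + (l.map (bg n)).prod)).prod * eI I := by
  induction L with
  | nil => simp
  | cons l L ih =>
    rw [List.map_cons, List.prod_cons, ← mul_assoc, one_add_eI I l (hL l (by simp)), mul_assoc,
      ih (fun j hj => hL j (by simp [hj])), mul_assoc]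

lemma Gam_Fl (I : Finset (Fin n)) (L : List (List (Fin n))) (hL : ∀ l ∈ L, ∀ i ∈ l, i ∈ I) :
    ∀ f : Vn n, Gam n f * (L.map (fun l => 1 + (l.map (bg n)).prod)).prod * eI I =
      Gam n (Fl L f) * eI I := by
  induction L with
  | nil => intro f; simp [Fl]
  | cons l L ih =>
    intro f
    have hl' : ∀ j ∈ L, ∀ i ∈ j, i ∈ I := fun j hj => hL j (by simp [hj])
    rw [List.map_cons, List.prod_cons, mul_assoc, mul_assoc, ← prod_eI I L hl',
      ← mul_assoc (1 + _), ← mul_assoc, ← mul_assoc, Gam_one_add I l (hL l (by simp)), mul_assoc,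
      prod_eI I L hl', ← mul_assoc, ih hl']
    rfl

/-! ### Sign functionals -/

/-- permutations fixing everything outside of `[a, b+1]` -/
def Fx (a b : Fin n) (u : Equiv.Perm (Fin (n + 1))) : Prop :=
  ∀ p : Fin (n + 1), ((p : ℕ) < a ∨ (b : ℕ) + 1 < p) → u p = p

lemma Fx_one (a b : Fin n) : Fx a b 1 := fun _ _ => rfl

lemma Fx_sT (a b i : Fin n) (h1 : a ≤ i) (h2 : i ≤ b) : Fx a b (sTrans i) := by
  intro p hp
  have h1' : (a : ℕ) ≤ i := h1
  have h2' : (i : ℕ) ≤ b := h2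
  apply sT_of_ne <;> intro h <;> subst h <;> simp at hp <;> omega

lemma Fx_mul {a b : Fin n} {u w : Equiv.Perm (Fin (n + 1))} (hu : Fx a b u) (hw : Fx a b w) :
    Fx a b (u * w) := by
  intro p hp
  rw [Equiv.Perm.mul_apply, hw p hp, hu p hp]

lemma Fx_inv {a b : Fin n} {u : Equiv.Perm (Fin (n + 1))} (hu : Fx a b u) :
    Fx a b u⁻¹ := by
  intro p hp
  rw [Equiv.Perm.inv_eq_iff_eq, hu p hp]

lemma Fx_range {a b : Fin n} {u : Equiv.Perm (Fin (n + 1))} (hu : Fx a b u)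
    (p : Fin (n + 1)) (hp : (a : ℕ) ≤ p ∧ (p : ℕ) ≤ b + 1) :
    (a : ℕ) ≤ u p ∧ (u p : ℕ) ≤ b + 1 := by
  by_contra hc
  have h : ((u p : ℕ) < a ∨ (b : ℕ) + 1 < u p) := by omega
  have := u.injective (hu _ h)
  rw [this] at h
  omega

lemma red_letters (a b : Fin n) (l : List (Fin n)) : ∀ r : Equiv.Perm (Fin (n + 1)), wd l = r →
    l.length = inv r → Fx a b r → ∀ i ∈ l, a ≤ i ∧ i ≤ b := by
  induction l using List.reverseRecOn with
  | nil => simp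
  | append_singleton l j ih =>
    intro r h1 h2 hF i hi
    obtain ⟨hd, e, len⟩ := last_desc h1 h2
    have hj : a ≤ j ∧ j ≤ b := by
      by_contra hc
      have hc' : (j : ℕ) < a ∨ (b : ℕ) < j := by
        rw [Fin.le_def, Fin.le_def] at hc; omega
      unfold IsDescent at hd
      rw [Fin.lt_def] at hd
      rcases hc' with h | h
      · have e1 := hF j.castSucc (Or.inl (by simpa using h))
        rw [e1] at hd
        have h3 := hF (r j.succ) (Or.inl (by simp at hd; omega))
        have := r.injective h3
        rw [this] at hd
        simp at hd
      · have e1 := hF j.succ (Or.inr (by simpa using h))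
        rw [e1] at hd
        have h3 := hF (r j.castSucc) (Or.inr (by simp at hd; omega))
        have := r.injective h3
        rw [this] at hd
        simp at hd
    rcases List.mem_append.1 hi with h | h
    · exact ih _ e len (Fx_mul hF (Fx_sT a b j hj.1 hj.2)) i h
    · rw [List.mem_singleton.1 h]; exact hj

/-- the sign functional of the coset of `w` -/
def lam (a b : Fin n) (w : Equiv.Perm (Fin (n + 1))) (f : Vn n) : Kv :=
  ∑ u ∈ Finset.univ.filter (fun u => Fx a b u), ((Equiv.Perm.sign u : ℤ) : Kv) * f (w * u)

lemma lam_add (a b : Fin n) (w : Equiv.Perm (Fin (n + 1))) (f h : Vn n) :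
    lam a b w (f + h) = lam a b w f + lam a b w h := by
  simp [lam, mul_add, Finset.sum_add_distrib]

lemma lam_smul (a b : Fin n) (w : Equiv.Perm (Fin (n + 1))) (c : Kv) (f : Vn n) :
    lam a b w (c • f) = c * lam a b w f := by
  simp only [lam, Pi.smul_apply, smul_eq_mul, Finset.mul_sum]
  refine Finset.sum_congr rfl fun u _ => ?_
  ring

lemma R_symm (i : Fin n) (f : Vn n) (w : Equiv.Perm (Fin (n + 1))) :
    (f + R i f) (w * sTrans i) = (f + R i f) w := by
  simp only [Pi.add_apply]
  by_cases h : IsDescent w i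
  · have h' : ¬ IsDescent (w * sTrans i) i := by rw [desc_mul]; exact not_not.2 h
    rw [R_desc _ _ _ h, R_asc _ _ _ h', mul_sT_sT]
    ring
  · have h' : IsDescent (w * sTrans i) i := by rw [desc_mul]; exact h
    rw [R_asc _ _ _ h, R_desc _ _ _ h', mul_sT_sT]
    ring

lemma lam_R (a b i : Fin n) (h1 : a ≤ i) (h2 : i ≤ b) (w : Equiv.Perm (Fin (n + 1)))
    (f : Vn n) : lam a b w (R i f) = - lam a b w f := by
  have : lam a b w (f + R i f) = 0 := by
    unfold lam
    apply Finset.sum_involution (fun u _ => u * sTrans i)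
    · intro u _
      rw [← mul_assoc, R_symm, Equiv.Perm.sign_mul, sT_sign]
      push_cast
      ring
    · intro u _ _ hc
      exact sT_ne_one i (mul_eq_left.1 hc)
    · intro u hu
      simp only [Finset.mem_filter, Finset.mem_univ, true_and] at hu ⊢
      exact Fx_mul hu (Fx_sT a b i h1 h2)
    · intro u _
      exact mul_sT_sT u i
  rw [lam_add] at this
  linear_combination this

lemma lam_Rl (a b : Fin n) (w : Equiv.Perm (Fin (n + 1))) (l : List (Fin n))
    (hl : ∀ i ∈ l, a ≤ i ∧ i ≤ b) : ∀ f : Vn n,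
    lam a b w (Rl l f) = (-1) ^ l.length * lam a b w f := by
  induction l with
  | nil => intro f; simp [Rl]
  | cons i l ih =>
    intro f
    have := hl i (by simp)
    rw [Rl, ih (fun j hj => hl j (by simp [hj])), lam_R a b i this.1 this.2, List.length_cons]
    ring

lemma sign_wd (l : List (Fin n)) : Equiv.Perm.sign (wd l) = (-1) ^ l.length := by
  induction l with
  | nil => simp [wd]
  | cons i l ih =>
    have : wd (i :: l) = sTrans i * wd l := by simp [wd]
    rw [this, Equiv.Perm.sign_mul, ih, sT_sign, List.length_cons, pow_succ']

lemma lam_swap (a b : Fin n) (w : Equiv.Perm (Fin (n + 1))) (l : List (Fin n))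
    (hl : ∀ i ∈ l, a ≤ i ∧ i ≤ b) (hs : (wd l).IsSwap) (f : Vn n) :
    lam a b w (f + Rl l f) = 0 := by
  have h := sign_wd l
  rw [hs.sign_eq] at h
  have h' : ((-1 : Kv)) ^ l.length = -1 := by
    have := congrArg (fun x : ℤˣ => ((x : ℤ) : Kv)) h
    simpa using this.symm
  rw [lam_add, lam_Rl a b w l hl, h']
  ring

/-- a function killed by all the sign functionals and vanishing on the good permutations is zero -/
lemma vanish (S : Set (Fin n × Fin n)) (f : Vn n)
    (hl : ∀ ab ∈ S, ∀ w, lam ab.1 ab.2 w f = 0)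
    (hD : ∀ w, (∀ ab ∈ S, ∃ j, ab.1 ≤ j ∧ j ≤ ab.2 ∧ IsDescent w j) → f w = 0) : f = 0 := by
  by_contra hne
  have hex : ∃ w, f w ≠ 0 := by
    by_contra hc
    push Not at hc
    exact hne (funext hc)
  obtain ⟨w0, hw0⟩ := hex
  obtain ⟨w, hw, hmax⟩ := Finset.exists_max_image (Finset.univ.filter (fun w => f w ≠ 0))
    (fun w : Equiv.Perm (Fin (n + 1)) => toLex (w : Fin (n + 1) → Fin (n + 1)))
    ⟨w0, by simpa using hw0⟩
  simp only [Finset.mem_filter, Finset.mem_univ, true_and] at hw hmax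
  have : ¬ (∀ ab ∈ S, ∃ j, ab.1 ≤ j ∧ j ≤ ab.2 ∧ IsDescent w j) := fun h => hw (hD w h)
  push Not at this
  obtain ⟨⟨a, b⟩, hab, hasc⟩ := this
  have h0 := hl _ hab w
  simp only at hasc h0
  -- `w` is increasing on `[a, b+1]`
  have hinc : ∀ (d : ℕ) (p p' : Fin (n + 1)), (a : ℕ) ≤ p → (p' : ℕ) ≤ b + 1 →
      (p' : ℕ) = p + d + 1 → w p < w p' := by
    intro d
    induction d with
    | zero =>
      intro p p' h1 h2 h3
      have hlt : (p : ℕ) < n := by omega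
      have := (not_desc_iff w ⟨p, hlt⟩).1 (hasc ⟨p, hlt⟩ h1 (by rw [Fin.le_def]; simp; omega))
      have e1 : (⟨p, hlt⟩ : Fin n).castSucc = p := Fin.ext rfl
      have e2 : (⟨p, hlt⟩ : Fin n).succ = p' := Fin.ext (by simp; omega)
      rwa [e1, e2] at this
    | succ d ih =>
      intro p p' h1 h2 h3
      have hlt : (p : ℕ) < n := by omega
      have := (not_desc_iff w ⟨p, hlt⟩).1 (hasc ⟨p, hlt⟩ h1 (by rw [Fin.le_def]; simp; omega))
      have e1 : (⟨p, hlt⟩ : Fin n).castSucc = p := Fin.ext rfl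
      rw [e1] at this
      exact this.trans (ih _ p' (by simp; omega) h2 (by simp; omega))
  apply hw
  unfold lam at h0
  rw [Finset.sum_eq_single 1] at h0
  · simpa using h0
  · intro u hu hu1
    simp only [Finset.mem_filter, Finset.mem_univ, true_and] at hu
    by_cases hfu : f (w * u) = 0
    · rw [hfu, mul_zero]
    exfalso
    refine absurd (hmax _ hfu) (not_le.2 ?_)
    have hmoved : (Finset.univ.filter (fun p => u p ≠ p)).Nonempty := by
      by_contra hc
      rw [Finset.not_nonempty_iff_eq_empty, Finset.filter_eq_empty_iff] at hc
      apply hu1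
      ext p
      have := @hc p (Finset.mem_univ _)
      rw [not_not] at this
      rw [this]; rfl
    set p := Finset.min' _ hmoved with hp
    have hpm : u p ≠ p := by
      have := Finset.min'_mem _ hmoved
      simpa using this
    have hless : ∀ p' < p, u p' = p' := by
      intro p' hlt
      by_contra hc
      have := Finset.min'_le (Finset.univ.filter (fun p => u p ≠ p)) p' (by simpa using hc)
      exact absurd hlt (not_lt.2 this)
    have hgt : p < u p := by
      rcases lt_trichotomy (u p) p with h | h | h
      · exact absurd (u.injective (hless _ h)) hpm
      · exact absurd h hpm
      · exact h
    have hpr : (a : ℕ) ≤ p ∧ (p : ℕ) ≤ b + 1 := by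
      by_contra hc
      exact hpm (hu p (by omega))
    have hur := Fx_range hu p hpr
    have hlt : w p < w (u p) := hinc ((u p : ℕ) - p - 1) p (u p) hpr.1 hur.2
      (by rw [Fin.lt_def] at hgt; omega)
    refine ⟨p, fun p' hp' => ?_, hlt⟩
    change w p' = w (u p')
    rw [hless p' hp']
  · intro h
    exact absurd (by simpa using Fx_one a b) h

/-! ### Leading terms -/

/-- `f` has leading term `w` -/
def Top (f : Vn n) (w : Equiv.Perm (Fin (n + 1))) : Prop :=
  f w = 1 ∧ ∀ u, f u ≠ 0 → u = w ∨ inv u < inv w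

lemma Top_dl (w : Equiv.Perm (Fin (n + 1))) : Top (dl w) w := by
  refine ⟨by simp [dl_apply], fun u hu => Or.inl ?_⟩
  by_contra hc
  exact hu (by simp [dl_apply, hc])

lemma Top_step (f : Vn n) (w : Equiv.Perm (Fin (n + 1))) (i : Fin n) (hd : IsDescent w i)
    (h : Top f (w * sTrans i)) : Top (f + R i f) w := by
  obtain ⟨h1, h2⟩ := h
  have hi := inv_mul_desc w i hd
  have hw : f w = 0 := by
    by_contra hc
    rcases h2 w hc with h | h
    · rw [← h] at hi; omega
    · omega
  constructor
  · rw [Pi.add_apply, R_desc _ _ _ hd, h1, hw]; ring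
  · intro u hu
    have hor : f u ≠ 0 ∨ f (u * sTrans i) ≠ 0 := by
      by_contra hc
      push Not at hc
      apply hu
      rw [Pi.add_apply]
      by_cases hdu : IsDescent u i
      · rw [R_desc _ _ _ hdu, hc.1, hc.2]; ring
      · rw [R_asc _ _ _ hdu, hc.1, hc.2]; ring
    rcases hor with h | h
    · rcases h2 u h with h | h
      · right; rw [h]; omega
      · right; omega
    · rcases h2 _ h with h | h
      · left; exact mul_right_cancel h
      · right
        by_cases hdu : IsDescent u i
        · have := inv_mul_desc u i hdu
          omega
        · have := inv_mul_asc u i hdu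
          omega

lemma Fl_append (L L' : List (List (Fin n))) : ∀ f : Vn n, Fl (L ++ L') f = Fl L' (Fl L f) := by
  induction L with
  | nil => intro f; rfl
  | cons l L ih => intro f; exact ih _

lemma Top_Fl (L : List (Fin n)) (hL : L.Pairwise (fun i j : Fin n => 2 ≤ Nat.dist i j)) :
    ∀ w : Equiv.Perm (Fin (n + 1)), (∀ i ∈ L, IsDescent w i) →
      ∃ w', Top (Fl (L.map (fun i => [i])) (dl w')) w := by
  induction L using List.reverseRecOn with
  | nil => intro w _; exact ⟨w, Top_dl w⟩
  | append_singleton L m ih =>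
    intro w hw
    rw [List.pairwise_append] at hL
    obtain ⟨w', hw'⟩ := ih hL.1 (w * sTrans m) (fun i hi => by
      rw [desc_mul_far _ _ _ (dist_symm' (hL.2.2 i hi m (by simp)))]
      exact hw i (by simp [hi]))
    refine ⟨w', ?_⟩
    rw [List.map_append, Fl_append]
    exact Top_step _ w m (hw m (by simp)) hw'


lemma block_far {I B B' : Finset (Fin n)} (hB : IsBlock I B) (hB' : IsBlock I B') (hne : B ≠ B')
    {i j : Fin n} (hi : i ∈ B) (hj : j ∈ B') : 2 ≤ Nat.dist i j := by
  obtain ⟨a, b, hab, rfl, hI, h1, h2⟩ := hB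
  obtain ⟨a', b', hab', rfl, hI', h1', h2'⟩ := hB'
  rw [Finset.mem_Icc, Fin.le_def, Fin.le_def] at hi hj
  by_contra hc
  have hc' : (i : ℕ) ≤ j + 1 ∧ (j : ℕ) ≤ i + 1 := by unfold Nat.dist at hc; omega
  apply hne
  have memI : ∀ c : Fin n, (a : ℕ) ≤ c → (c : ℕ) ≤ b → c ∈ I := fun c h h' =>
    hI (Finset.mem_Icc.2 ⟨h, h'⟩)
  have memI' : ∀ c : Fin n, (a' : ℕ) ≤ c → (c : ℕ) ≤ b' → c ∈ I := fun c h h' =>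
    hI' (Finset.mem_Icc.2 ⟨h, h'⟩)
  have ea : (a : ℕ) = a' := by
    rcases lt_trichotomy (a : ℕ) a' with h | h | h
    · exact absurd (memI ⟨a' - 1, by omega⟩ (by simp; omega) (by simp; omega))
        (h1' _ (by simp; omega))
    · exact h
    · exact absurd (memI' ⟨a - 1, by omega⟩ (by simp; omega) (by simp; omega))
        (h1 _ (by simp; omega))
  have eb : (b : ℕ) = b' := by
    rcases lt_trichotomy (b : ℕ) b' with h | h | h
    · exact absurd (memI' ⟨b + 1, by omega⟩ (by simp; omega) (by simp; omega))
        (h2 _ (by simp))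
    · exact h
    · exact absurd (memI ⟨b' + 1, by omega⟩ (by simp; omega) (by simp; omega))
        (h2' _ (by simp))
  rw [Fin.ext ea, Fin.ext eb]

lemma mem_blocksOf {I B : Finset (Fin n)} : B ∈ blocksOf I ↔ IsBlock I B := by
  unfold blocksOf
  rw [Finset.mem_filter, Finset.mem_powerset]
  constructor
  · exact fun h => h.2
  · intro h
    refine ⟨?_, h⟩
    obtain ⟨a, b, _, _, h, _⟩ := h
    exact h

lemma words_commute (l l' : List (Fin n)) (h : ∀ i ∈ l, ∀ j ∈ l', 2 ≤ Nat.dist i j) :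
    Commute (1 + (l.map (bg n)).prod) (1 + (l'.map (bg n)).prod) := by
  have : Commute (l.map (bg n)).prod (l'.map (bg n)).prod := by
    apply Commute.list_prod_left
    intro x hx
    apply Commute.list_prod_right
    intro y hy
    obtain ⟨i, hi, rfl⟩ := List.mem_map.1 hx
    obtain ⟨j, hj, rfl⟩ := List.mem_map.1 hy
    exact bg_comm i j (h i hi j hj)
  exact ((Commute.one_left _).add_left ((Commute.one_right _).add_right this))

/-- the generating set of the statement -/
def gens (I : Finset (Fin n)) (k : ℕ) (B : Fin k → Finset (Fin n)) : Set (BT n) :=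
  {x : BT n |
    ∃ (w : Equiv.Perm (Fin (n + 1))) (lw : List (Fin n)),
      IsReducedWord w lw ∧
      ∃ (r : Fin k → Equiv.Perm (Fin (n + 1))) (lr : Fin k → List (Fin n)),
        (∀ j, (r j).IsSwap ∧
          r j ∈ Subgroup.closure
            {p : Equiv.Perm (Fin (n + 1)) | ∃ m ∈ B j, p = sTrans m}) ∧
        (∀ j, IsReducedWord (r j) (lr j)) ∧
        x = (lw.map (bg n)).prod *
              ((List.finRange k).map (fun j => 1 + ((lr j).map (bg n)).prod)).prod *
              ((I.sort (· ≤ ·)).map (be n)).prod}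

/-- endpoints of blocks -/
def ends (I : Finset (Fin n)) : Set (Fin n × Fin n) := {ab | IsBlock I (Finset.Icc ab.1 ab.2)}

/-- common kernel of the sign functionals -/
def Zk (I : Finset (Fin n)) : Submodule Kv (Vn n) where
  carrier := {f | ∀ ab ∈ ends I, ∀ w, lam ab.1 ab.2 w f = 0}
  add_mem' := by
    intro f h hf hh ab hab w
    rw [lam_add, hf ab hab, hh ab hab, add_zero]
  zero_mem' := by
    intro ab _ w
    simp [lam]
  smul_mem' := by
    intro c f hf ab hab w
    rw [lam_smul, hf ab hab, mul_zero]

lemma closure_Fx (a b : Fin n) (B : Finset (Fin n)) (hB : B = Finset.Icc a b)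
    (r : Equiv.Perm (Fin (n + 1)))
    (hr : r ∈ Subgroup.closure {p : Equiv.Perm (Fin (n + 1)) | ∃ m ∈ B, p = sTrans m}) :
    Fx a b r := by
  induction hr using Subgroup.closure_induction with
  | mem x hx =>
    obtain ⟨m, hm, rfl⟩ := hx
    rw [hB, Finset.mem_Icc] at hm
    exact Fx_sT a b m hm.1 hm.2
  | one => exact Fx_one a b
  | mul x y _ _ hx hy => exact Fx_mul hx hy
  | inv x _ hx => exact Fx_inv hx

lemma gens_mem (I : Finset (Fin n)) (k : ℕ) (B : Fin k → Finset (Fin n))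
    (hBmem : ∀ j, B j ∈ blocksOf I) (hBinj : Function.Injective B)
    (hBsurj : ∀ b ∈ blocksOf I, ∃ j, B j = b) (x : BT n) (hx : x ∈ gens I k B) :
    ∃ f ∈ Zk I, Psi I f = x := by
  obtain ⟨w, lw, hlw, r, lr, hr, hlr, rfl⟩ := hx
  rw [reduced_iff] at hlw
  have hlr' := fun j => (reduced_iff _ _).1 (hlr j)
  have hblk := fun j => mem_blocksOf.1 (hBmem j)
  -- letters
  have hlet : ∀ j, ∀ i ∈ lr j, i ∈ B j := by
    intro j i hi
    obtain ⟨a, b, _, e, _⟩ := hblk j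
    have := red_letters a b (lr j) (r j) (hlr' j).1 (hlr' j).2
      (closure_Fx a b _ e _ (hr j).2) i hi
    rw [e, Finset.mem_Icc]
    exact this
  have hBI : ∀ j, B j ⊆ I := by
    intro j
    obtain ⟨a, b, _, _, h, _⟩ := hblk j
    exact h
  have hletI : ∀ j, ∀ i ∈ lr j, i ∈ I := fun j i hi => hBI j (hlet j i hi)
  rw [gw_eq hlw.1 hlw.2, ← Gam_dl]
  have key : ∀ J : List (Fin k), Gam n (dl w) *
      (J.map (fun j => 1 + ((lr j).map (bg n)).prod)).prod * eI I =
      Gam n (Fl (J.map lr) (dl w)) * eI I := by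
    intro J
    rw [← Gam_Fl I (J.map lr)]
    · rw [List.map_map]; rfl
    · intro l hl
      obtain ⟨j, _, rfl⟩ := List.mem_map.1 hl
      exact hletI j
  refine ⟨Fl ((List.finRange k).map lr) (dl w), ?_, (key _).symm⟩
  rintro ⟨a, b⟩ hab u
  obtain ⟨j, hj⟩ := hBsurj _ (mem_blocksOf.2 hab)
  simp only at hj ⊢
  obtain ⟨J1, J2, hJ⟩ := List.append_of_mem (List.mem_finRange j)
  have hnd := List.nodup_finRange k
  rw [hJ] at hnd
  have hj2 : j ∉ J2 := by
    have := (List.nodup_append.1 hnd).2.1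
    exact (List.nodup_cons.1 this).1
  -- move the factor of `j` to the end
  have hcomm : Commute (1 + ((lr j).map (bg n)).prod)
      (J2.map (fun j => 1 + ((lr j).map (bg n)).prod)).prod := by
    apply Commute.list_prod_right
    intro y hy
    obtain ⟨j', hj', rfl⟩ := List.mem_map.1 hy
    apply words_commute
    intro i hi i' hi'
    refine block_far (hblk j) (hblk j') ?_ (hlet j i hi) (hlet j' i' hi')
    intro h
    rw [hBinj h] at hj2
    exact hj2 hj'
  have e : Gam n (Fl ((List.finRange k).map lr) (dl w)) * eI I =
      Gam n (Fl ((J1 ++ J2 ++ [j]).map lr) (dl w)) * eI I := by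
    rw [← key, ← key, hJ]
    simp only [List.map_append, List.map_cons, List.map_nil, List.prod_append, List.prod_cons,
      List.prod_nil, mul_one]
    rw [hcomm.eq]
    simp only [mul_assoc]
  rw [Psi_inj I e, List.map_append, Fl_append]
  apply lam_swap
  · intro i hi
    have := hlet j i hi
    rwa [hj, Finset.mem_Icc] at this
  · have := (hr j).1
    rwa [← (hlr' j).1] at this

lemma inv_sT (m : Fin n) : inv (sTrans m) = 1 := by
  have := inv_mul_asc 1 m (by rw [not_desc_iff]; simp [Fin.lt_def])
  rwa [one_mul, inv_one] at this

lemma lower (I : Finset (Fin n)) (k : ℕ) (B : Fin k → Finset (Fin n))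
    (hBmem : ∀ j, B j ∈ blocksOf I) (hBinj : Function.Injective B)
    (w : Equiv.Perm (Fin (n + 1))) (hw : ∀ b ∈ blocksOf I, ∃ j ∈ b, IsDescent w j) :
    ∃ f, Top f w ∧ Psi I f ∈ gens I k B := by
  choose m hm hd using fun j => hw (B j) (hBmem j)
  have hblk := fun j => mem_blocksOf.1 (hBmem j)
  have hpw : ((List.finRange k).map m).Pairwise (fun i j : Fin n => 2 ≤ Nat.dist i j) := by
    rw [List.pairwise_map]
    refine List.Pairwise.imp ?_ (List.nodup_finRange k)
    intro a b hab
    exact block_far (hblk a) (hblk b) (fun h => hab (hBinj h)) (hm a) (hm b)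
  obtain ⟨w', hw'⟩ := Top_Fl _ hpw w (by
    intro i hi
    obtain ⟨j, _, rfl⟩ := List.mem_map.1 hi
    exact hd j)
  refine ⟨_, hw', ?_⟩
  obtain ⟨l, hl, hlen⟩ := exists_word _ w' rfl
  refine ⟨w', l, (reduced_iff _ _).2 ⟨hl, hlen⟩, fun j => sTrans (m j), fun j => [m j], ?_, ?_, ?_⟩
  · intro j
    refine ⟨⟨_, _, ?_, rfl⟩, Subgroup.subset_closure ⟨m j, hm j, rfl⟩⟩
    simp [Fin.ext_iff]
  · intro j
    rw [reduced_iff]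
    exact ⟨by simp [wd], by rw [inv_sT]; rfl⟩
  · rw [Psi_apply, ← Gam_Fl, Gam_dl, gw_eq hl hlen, List.map_map, List.map_map]
    · rfl
    · intro l hl i hi
      obtain ⟨i', hi', rfl⟩ := List.mem_map.1 hl
      obtain ⟨j, _, rfl⟩ := List.mem_map.1 hi'
      rw [List.mem_singleton.1 hi]
      obtain ⟨a, b, _, _, h, _⟩ := hblk j
      exact h (hm j)

lemma top_indep (D : Finset (Equiv.Perm (Fin (n + 1)))) (F : D → Vn n)
    (hF : ∀ w : D, Top (F w) w) : LinearIndependent Kv F := by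
  rw [Fintype.linearIndependent_iff]
  intro c hc
  by_contra hne
  push Not at hne
  obtain ⟨i0, hi0⟩ := hne
  obtain ⟨w, hw, hmax⟩ := Finset.exists_max_image (Finset.univ.filter (fun w : D => c w ≠ 0))
    (fun w : D => inv (w : Equiv.Perm (Fin (n + 1)))) ⟨i0, by simpa using hi0⟩
  simp only [Finset.mem_filter, Finset.mem_univ, true_and] at hw hmax
  have h := congrFun hc w
  rw [Finset.sum_apply, Finset.sum_eq_single w] at h
  · simp only [Pi.smul_apply, (hF w).1, smul_eq_mul, mul_one, Pi.zero_apply] at h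
    exact hw h
  · intro u _ hu
    rw [Pi.smul_apply, smul_eq_mul]
    by_cases hcu : c u = 0
    · rw [hcu, zero_mul]
    by_cases hfu : F u w = 0
    · rw [hfu, mul_zero]
    exfalso
    rcases (hF u).2 _ hfu with h | h
    · exact hu (Subtype.ext h.symm)
    · have := hmax u hcu
      omega
  · intro h
    exact absurd (Finset.mem_univ _) h

lemma main (I : Finset (Fin n)) (k : ℕ) (B : Fin k → Finset (Fin n))
    (hBmem : ∀ j, B j ∈ blocksOf I) (hBinj : Function.Injective B)
    (hBsurj : ∀ b ∈ blocksOf I, ∃ j, B j = b) :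
    Module.finrank Kv (Submodule.span Kv (gens I k B)) = DIval I := by
  set Y := Submodule.span Kv (gens I k B) with hY
  have hle : Y ≤ (Zk I).map (Psi I) := by
    rw [hY, Submodule.span_le]
    intro x hx
    obtain ⟨f, hf, rfl⟩ := gens_mem I k B hBmem hBinj hBsurj x hx
    exact ⟨f, hf, rfl⟩
  set Y' := Y.comap (Psi I) with hY'
  have hYmap : Y'.map (Psi I) = Y := by
    apply Submodule.map_comap_eq_of_le
    intro x hx
    obtain ⟨f, _, rfl⟩ := hle hx
    exact ⟨f, rfl⟩
  have hfr : Module.finrank Kv Y = Module.finrank Kv Y' := by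
    rw [← hYmap]
    exact (Submodule.equivMapOfInjective (Psi I) (Psi_inj I) Y').finrank_eq.symm
  have hYZ : Y' ≤ Zk I := by
    intro f hf
    obtain ⟨f', hf', e⟩ := hle hf
    rwa [← Psi_inj I e]
  set D := Finset.univ.filter (fun w : Equiv.Perm (Fin (n + 1)) =>
    ∀ B ∈ blocksOf I, ∃ j ∈ B, IsDescent w j) with hD
  have hcard : DIval I = Fintype.card D := by
    rw [Fintype.card_coe]; rfl
  rw [hfr, hcard]
  apply le_antisymm
  · let rho : Y' →ₗ[Kv] (D → Kv) :=
      (LinearMap.funLeft Kv Kv (fun w : D => (w : Equiv.Perm (Fin (n + 1))))).comp Y'.subtype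
    have hinj : Function.Injective rho := by
      rw [← LinearMap.ker_eq_bot, LinearMap.ker_eq_bot']
      rintro ⟨f, hf⟩ h0
      have : f = 0 := by
        refine vanish (ends I) f (hYZ hf) ?_
        intro w hw
        have hwD : w ∈ D := by
          rw [hD, Finset.mem_filter]
          refine ⟨Finset.mem_univ _, fun b hb => ?_⟩
          have hb' := mem_blocksOf.1 hb
          obtain ⟨a, c, _, e, _⟩ := id hb'
          rw [e] at hb'
          obtain ⟨j, h1, h2, h3⟩ := hw (a, c) hb'
          exact ⟨j, by rw [e, Finset.mem_Icc]; exact ⟨h1, h2⟩, h3⟩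
        exact congrFun h0 ⟨w, hwD⟩
      exact Subtype.ext this
    have := LinearMap.finrank_le_finrank_of_injective hinj
    rwa [Module.finrank_fintype_fun_eq_card] at this
  · have hlow : ∀ w : D, ∃ f, Top f (w : Equiv.Perm (Fin (n + 1))) ∧ Psi I f ∈ gens I k B := by
      intro w
      exact lower I k B hBmem hBinj w (Finset.mem_filter.1 w.2).2
    choose F hF hFg using hlow
    have hli := top_indep D F hF
    let F' : D → Y' := fun w => ⟨F w, Submodule.subset_span (hFg w)⟩
    have hli' : LinearIndependent Kv F' := by
      apply LinearIndependent.of_comp Y'.subtype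
      exact hli
    exact hli'.fintype_card_le_finrank

end BTaux

/-- Let `I ⊆ {1,…,n}` have contiguous blocks `B_1, …, B_k`. The
`ℂ(v)`-span in `ℰ_n(v)` of the elements `g_w · (1 + g_{r_1}) ⋯ (1 + g_{r_k}) · ∏_{i∈I} e_i`,
over all `w ∈ S_{n+1}` and all transpositions `r_j ∈ W_{B_j}`, has dimension `D_I`. -/
theorem span_dimension_eq_DI (n : ℕ) (hn : 1 ≤ n) (I : Finset (Fin n))
    (k : ℕ) (B : Fin k → Finset (Fin n))
    (hBmem : ∀ j, B j ∈ blocksOf I) (hBinj : Function.Injective B)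
    (hBsurj : ∀ b ∈ blocksOf I, ∃ j, B j = b) :
    Module.finrank Kv
        ↥(Submodule.span Kv
          {x : BT n |
            ∃ (w : Equiv.Perm (Fin (n + 1))) (lw : List (Fin n)),
              IsReducedWord w lw ∧
              ∃ (r : Fin k → Equiv.Perm (Fin (n + 1))) (lr : Fin k → List (Fin n)),
                (∀ j, (r j).IsSwap ∧
                  r j ∈ Subgroup.closure
                    {p : Equiv.Perm (Fin (n + 1)) | ∃ m ∈ B j, p = sTrans m}) ∧
                (∀ j, IsReducedWord (r j) (lr j)) ∧
                x = (lw.map (bg n)).prod *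
                      ((List.finRange k).map (fun j => 1 + ((lr j).map (bg n)).prod)).prod *
                      ((I.sort (· ≤ ·)).map (be n)).prod}) =
      DIval I := by
  exact BTaux.main I k B hBmem hBinj hBsurj
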